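/- Let D_σ and D_τ be finite field extensions of a finite field C inside a fixed algebraic closure, of degrees d_σ and d_τ, let D be the compositum (of degree lcm(d_σ,d_τ)) and D' = D_σ ∩ D_τ (of degree gcd(d_σ,d_τ)). Then D_σ and D_τ are linearly disjoint over D', D_σ ⊗_{D'} D_τ ≅ D, and D_σ ⊗_C D_τ is isomorphic as a C-algebra to the product of [D':C] copies of D. -/

import Mathlib

open scoped TensorProduct

open Module IntermediateField

set_option synthInstance.maxHeartbeats 1000000
set_option maxHeartbeats 1000000

/-!
For finite `F`-extensions `A`, `B` in a common field, with `A / F` Galois, `A` and `B` are linearly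
disjoint over `A ⊓ B`. Each `σ ∈ Gal(A/F)` gives a surjection `a ⊗ b ↦ σ⁻¹ a * b` from `A ⊗ B` onto
the field `A ⊔ B`. Automorphisms in different left cosets of the subgroup fixing `A ⊓ B` give
different maximal ideals as kernels, so by the Chinese remainder theorem `A ⊗ B` maps onto
`[A ⊓ B : F]` copies of `A ⊔ B`, and both sides have dimension `[A : F] [B : F]`.

Over a finite field with `q` elements, `[A : F] ∣ n` if and only if `x ^ q ^ n = x` on `A`.
Such `x` form a field, so `[A ⊔ B : F] ∣ n` if and only if both degrees divide `n`. Hence the degree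
of the compositum is the least common multiple, and that of the intersection follows from the
product formula `[A ⊓ B : F] [A ⊔ B : F] = [A : F] [B : F]`.
-/

theorem algHom_pi_surjective_of_injective_ker {S R ι : Type*} {L : ι → Type*} [CommSemiring S]
    [CommRing R] [Algebra S R] [Finite ι] [∀ i, Field (L i)] [∀ i, Algebra S (L i)]
    (f : ∀ i, R →ₐ[S] L i) (hf : ∀ i, Function.Surjective (f i))
    (hker : Function.Injective fun i => RingHom.ker (f i)) :
    Function.Surjective (AlgHom.pi f) := by
  intro y
  have maximal (i : ι) : (RingHom.ker (f i)).IsMaximal :=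
    RingHom.ker_isMaximal_of_surjective (f i) (hf i)
  have coprime : Pairwise (Function.onFun IsCoprime fun i => RingHom.ker (f i)) :=
    fun i j hij => Ideal.isCoprime_iff_sup_eq.2 <|
      (maximal i).coprime_of_ne (maximal j) (hker.ne hij)
  choose x hx using fun i => hf i (y i)
  obtain ⟨r, hr⟩ := Ideal.exists_forall_sub_mem_ideal coprime x
  exact ⟨r, funext fun i => ((RingHom.sub_mem_ker_iff (f i)).1 (hr i)).trans (hx i)⟩

section Compositum

variable {F E : Type*} [Field F] [Field E] [Algebra F E] (A B : IntermediateField F E)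

theorem linearDisjoint_extendScalars_inf [IsGalois F A] [FiniteDimensional F A]
    [FiniteDimensional F B] :
    (extendScalars (inf_le_left : A ⊓ B ≤ A)).LinearDisjoint
      (extendScalars (inf_le_right : A ⊓ B ≤ B)) := by
  let A' := extendScalars (inf_le_left : A ⊓ B ≤ A)
  let B' := extendScalars (inf_le_right : A ⊓ B ≤ B)
  have : IsGalois F A' := ‹IsGalois F A›
  have : FiniteDimensional F A' := ‹FiniteDimensional F A›
  have : FiniteDimensional F B' := ‹FiniteDimensional F B›
  have : IsGalois ↥(A ⊓ B) A' := .tower_top_of_isGalois F _ _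
  have : FiniteDimensional ↥(A ⊓ B) A' := .right F _ _
  have : FiniteDimensional ↥(A ⊓ B) B' := .right F _ _
  refine LinearDisjoint.of_inf_eq_bot ?_
  rw [extendScalars_inf, extendScalars_self]

theorem finrank_inf_mul_finrank_sup [IsGalois F A] [FiniteDimensional F A]
    [FiniteDimensional F B] :
    finrank F ↥(A ⊓ B) * finrank F ↥(A ⊔ B) = finrank F A * finrank F B := by
  have tower {L : IntermediateField F E} (h : A ⊓ B ≤ L) :
      finrank F ↥(A ⊓ B) * finrank ↥(A ⊓ B) (extendScalars h) = finrank F L :=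
    finrank_mul_finrank F ↥(A ⊓ B) (extendScalars h)
  have sup_eq := (linearDisjoint_extendScalars_inf A B).finrank_sup
  rw [extendScalars_sup] at sup_eq
  rw [← tower inf_le_left, ← tower inf_le_right, ← tower (le_sup_of_le_left inf_le_left), sup_eq]
  ring

variable {A B} in
theorem nonempty_tensorProduct_algEquiv_sup [Algebra.IsAlgebraic F A] (h : A.LinearDisjoint B) :
    Nonempty ((A ⊗[F] B) ≃ₐ[F] ↥(A ⊔ B)) :=
  ⟨(linearDisjoint_iff'.1 h).mulMap.trans
    (Subalgebra.equivOfEq _ _ (sup_toSubalgebra_of_isAlgebraic_left A B).symm)⟩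

theorem nonempty_tensorProduct_inf_algEquiv_sup [IsGalois F A] [FiniteDimensional F A]
    [FiniteDimensional F B] :
    Nonempty
      ((extendScalars (inf_le_left : A ⊓ B ≤ A) ⊗[↥(A ⊓ B)]
          extendScalars (inf_le_right : A ⊓ B ≤ B)) ≃ₐ[↥(A ⊓ B)]
        extendScalars (le_sup_of_le_left inf_le_left : A ⊓ B ≤ A ⊔ B)) := by
  let A' := extendScalars (inf_le_left : A ⊓ B ≤ A)
  have : FiniteDimensional F A' := ‹FiniteDimensional F A›
  have : FiniteDimensional ↥(A ⊓ B) A' := .right F _ _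
  rw [← extendScalars_sup]
  exact nonempty_tensorProduct_algEquiv_sup (linearDisjoint_extendScalars_inf A B)

/-- The multiplication map `a ⊗ b ↦ σ⁻¹ a * b` from `A ⊗ B` to the compositum, twisted by an
automorphism `σ` of `A`. The inverse makes its kernel depend only on the left coset of `σ`
modulo the automorphisms fixing `A ⊓ B`. -/
noncomputable def twistedMul (σ : Gal(A/F)) : A ⊗[F] B →ₐ[F] ↥(A ⊔ B) :=
  Algebra.TensorProduct.productMap
    ((inclusion le_sup_left).comp (σ⁻¹ : Gal(A/F)).toAlgHom) (inclusion le_sup_right)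

theorem coe_twistedMul_tmul (σ : Gal(A/F)) (a : A) (b : B) :
    (twistedMul A B σ (a ⊗ₜ b) : E) = (σ⁻¹ a : A) * b := rfl

theorem twistedMul_surjective [Algebra.IsAlgebraic F A] (σ : Gal(A/F)) :
    Function.Surjective (twistedMul A B σ) := by
  have val_comp : (A ⊔ B).val.comp (twistedMul A B σ) =
      Algebra.TensorProduct.productMap (A.val.comp (σ⁻¹ : Gal(A/F)).toAlgHom) B.val := by
    ext x <;> simp [coe_twistedMul_tmul]
  have range_eq : ((A ⊔ B).val.comp (twistedMul A B σ)).range = (A ⊔ B).toSubalgebra := by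
    rw [val_comp, Algebra.TensorProduct.productMap_range, AlgHom.range_comp,
      (AlgHom.range_eq_top _).2 (σ⁻¹ : Gal(A/F)).surjective, Algebra.map_top, range_val,
      range_val, sup_toSubalgebra_of_isAlgebraic_left]
  rintro ⟨x, hx⟩
  rw [← mem_toSubalgebra, ← range_eq] at hx
  obtain ⟨t, rfl⟩ := hx
  exact ⟨t, rfl⟩

theorem inv_mul_mem_fixingSubgroup_of_ker_twistedMul_eq {σ τ : Gal(A/F)}
    (h : RingHom.ker (twistedMul A B σ) = RingHom.ker (twistedMul A B τ)) :
    σ⁻¹ * τ ∈ (restrict (inf_le_left : A ⊓ B ≤ A)).fixingSubgroup := by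
  rw [← inv_mem_iff, mul_inv_rev, inv_inv, IntermediateField.mem_fixingSubgroup_iff]
  intro z hz
  have hzB : (z : E) ∈ B := ((mem_restrict inf_le_left z).1 hz).2
  have coe_twistedMul (ρ : Gal(A/F)) :
      (twistedMul A B ρ (σ z ⊗ₜ 1 - 1 ⊗ₜ ⟨z, hzB⟩) : E) = (ρ⁻¹ * σ) z - z := by
    simp [coe_twistedMul_tmul]
  have mem_ker : σ z ⊗ₜ 1 - 1 ⊗ₜ ⟨z, hzB⟩ ∈ RingHom.ker (twistedMul A B τ) := by
    rw [← h, RingHom.mem_ker]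
    exact Subtype.ext ((coe_twistedMul σ).trans (by simp))
  rw [RingHom.mem_ker] at mem_ker
  refine Subtype.ext (sub_eq_zero.1 ((coe_twistedMul τ).symm.trans ?_))
  rw [mem_ker, ZeroMemClass.coe_zero]

theorem nonempty_tensorProduct_algEquiv_pi [IsGalois F A] [FiniteDimensional F A]
    [FiniteDimensional F B] :
    Nonempty ((A ⊗[F] B) ≃ₐ[F] (Fin (finrank F ↥(A ⊓ B)) → ↥(A ⊔ B))) := by
  let H := (restrict (inf_le_left : A ⊓ B ≤ A)).fixingSubgroup
  have card_quotient : Nat.card (Gal(A/F) ⧸ H) = finrank F ↥(A ⊓ B) := by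
    rw [(restrictAlgEquiv inf_le_left).toLinearEquiv.finrank_eq, finrank_eq_fixingSubgroup_index,
      Subgroup.index]
  let Φ : A ⊗[F] B →ₐ[F] (Gal(A/F) ⧸ H → ↥(A ⊔ B)) :=
    AlgHom.pi fun c => twistedMul A B c.out
  have ker_injective : Function.Injective fun c : Gal(A/F) ⧸ H =>
      RingHom.ker (twistedMul A B c.out) := by
    intro c d hcd
    rw [← c.out_eq', ← d.out_eq', QuotientGroup.eq]
    exact inv_mul_mem_fixingSubgroup_of_ker_twistedMul_eq A B hcd
  have surjective : Function.Surjective Φ := by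
    have chineseRemainder := algHom_pi_surjective_of_injective_ker (R := A ⊗[F] B)
      fun c : Gal(A/F) ⧸ H => twistedMul A B c.out
    exact chineseRemainder (fun c => twistedMul_surjective A B c.out) ker_injective
  have finrank_eq : finrank F (A ⊗[F] B) = finrank F (Gal(A/F) ⧸ H → ↥(A ⊔ B)) := by
    have := Fintype.ofFinite (Gal(A/F) ⧸ H)
    rw [finrank_tensorProduct, finrank_pi_fintype, Finset.sum_const, Finset.card_univ,
      ← Nat.card_eq_fintype_card, card_quotient, smul_eq_mul, finrank_inf_mul_finrank_sup]
  have injective : Function.Injective Φ :=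
    (LinearMap.injective_iff_surjective_of_finrank_eq_finrank
      (f := Φ.toLinearMap) finrank_eq).2 surjective
  exact ⟨(AlgEquiv.ofBijective Φ ⟨injective, surjective⟩).trans
    (AlgEquiv.piCongrLeft F (fun _ => ↥(A ⊔ B)) (Finite.equivFinOfCardEq card_quotient))⟩

end Compositum

section FiniteField

theorem frobeniusAlgHom_pow_apply {C R : Type*} [Field C] [Fintype C] [CommRing R] [Algebra C R]
    (n : ℕ) (x : R) : (FiniteField.frobeniusAlgHom C R ^ n) x = x ^ Nat.card C ^ n := by
  rw [AlgHom.coe_pow, FiniteField.coe_frobeniusAlgHom, pow_iterate, Nat.card_eq_fintype_card]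

variable {C K : Type*} [Field C] [Finite C] [Field K] [Algebra C K]

variable (C K) in
/-- The intermediate field of `K / C` fixed by the `n`-th power of the Frobenius of `C`; for `n`
positive it is the largest one whose degree divides `n`. -/
noncomputable def frobeniusPowFixedField (n : ℕ) : IntermediateField C K :=
  have := Fintype.ofFinite C
  (AlgHom.equalizer (FiniteField.frobeniusAlgHom C K ^ n) (AlgHom.id C K)).toIntermediateField
    fun x hx => by
      rw [AlgHom.mem_equalizer] at hx ⊢
      rw [map_inv₀, map_inv₀, hx]

theorem mem_frobeniusPowFixedField_iff {n : ℕ} {x : K} :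
    x ∈ frobeniusPowFixedField C K n ↔ x ^ Nat.card C ^ n = x := by
  let := Fintype.ofFinite C
  change (FiniteField.frobeniusAlgHom C K ^ n) x = x ↔ _
  rw [frobeniusAlgHom_pow_apply]

theorem le_frobeniusPowFixedField_iff_finrank_dvd {A : IntermediateField C K}
    [FiniteDimensional C A] {n : ℕ} :
    A ≤ frobeniusPowFixedField C K n ↔ finrank C A ∣ n := by
  have := Fintype.ofFinite C
  have : Finite A := Module.finite_of_finite C
  rw [← FiniteField.orderOf_frobeniusAlgHom, orderOf_dvd_iff_pow_eq_one, AlgHom.ext_iff,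
    SetLike.le_def, Subtype.forall]
  refine forall₂_congr fun x hx => ?_
  rw [mem_frobeniusPowFixedField_iff, frobeniusAlgHom_pow_apply, AlgHom.one_apply,
    Subtype.ext_iff, SubmonoidClass.coe_pow]

variable (A B : IntermediateField C K) [FiniteDimensional C A] [FiniteDimensional C B]

theorem finrank_sup_eq_lcm :
    finrank C ↥(A ⊔ B) = Nat.lcm (finrank C A) (finrank C B) := by
  refine Nat.dvd_right_iff_eq.1 fun n => ?_
  simp only [← le_frobeniusPowFixedField_iff_finrank_dvd, sup_le_iff, Nat.lcm_dvd_iff]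

theorem finrank_inf_eq_gcd :
    finrank C ↥(A ⊓ B) = Nat.gcd (finrank C A) (finrank C B) := by
  have : Finite A := Module.finite_of_finite C
  have product_formula := finrank_inf_mul_finrank_sup A B
  rw [finrank_sup_eq_lcm, ← Nat.gcd_mul_lcm (finrank C A)] at product_formula
  exact Nat.eq_of_mul_eq_mul_right (Nat.lcm_pos finrank_pos finrank_pos) product_formula

end FiniteField

theorem finite_field_compositum_tensor_general
    (C K : Type*) [Field C] [Finite C] [Field K] [Algebra C K]
    (Dσ Dτ : IntermediateField C K)
    [FiniteDimensional C Dσ] [FiniteDimensional C Dτ] :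
    (finrank C ↥(Dσ ⊔ Dτ) = Nat.lcm (finrank C Dσ) (finrank C Dτ)) ∧
    (finrank C ↥(Dσ ⊓ Dτ) = Nat.gcd (finrank C Dσ) (finrank C Dτ)) ∧
    (extendScalars (inf_le_left : Dσ ⊓ Dτ ≤ Dσ)).LinearDisjoint
      (extendScalars (inf_le_right : Dσ ⊓ Dτ ≤ Dτ)) ∧
    Nonempty
      ((↥(extendScalars (inf_le_left : Dσ ⊓ Dτ ≤ Dσ)) ⊗[↥(Dσ ⊓ Dτ)]
          ↥(extendScalars (inf_le_right : Dσ ⊓ Dτ ≤ Dτ))) ≃ₐ[↥(Dσ ⊓ Dτ)]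
        ↥(extendScalars (le_trans inf_le_left le_sup_left : Dσ ⊓ Dτ ≤ Dσ ⊔ Dτ))) ∧
    Nonempty
      ((↥Dσ ⊗[C] ↥Dτ) ≃ₐ[C]
        (Fin (finrank C ↥(Dσ ⊓ Dτ)) → ↥(Dσ ⊔ Dτ))) := by
  have : Finite Dσ := Module.finite_of_finite C
  exact ⟨finrank_sup_eq_lcm Dσ Dτ, finrank_inf_eq_gcd Dσ Dτ,
    linearDisjoint_extendScalars_inf Dσ Dτ, nonempty_tensorProduct_inf_algEquiv_sup Dσ Dτ,
    nonempty_tensorProduct_algEquiv_pi Dσ Dτ⟩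

/-- Let `D_σ` and `D_τ` be finite extensions of a finite field `C` inside a
fixed algebraic closure `K`, of degrees `d_σ` and `d_τ`, let `D = D_σ ⊔ D_τ` be
the compositum and `D' = D_σ ⊓ D_τ`.  Then:
(1) `[D : C] = lcm(d_σ, d_τ)` and `[D' : C] = gcd(d_σ, d_τ)`;
(2) `D_σ` and `D_τ` are linearly disjoint over `D'`;
(3) `D_σ ⊗_{D'} D_τ ≅ D` as `D'`-algebras;
(4) `D_σ ⊗_C D_τ` is isomorphic as a `C`-algebra to the product of `[D' : C]`
    copies of `D`. -/
theorem finite_field_compositum_tensor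
    (C K : Type*) [Field C] [Finite C] [Field K] [Algebra C K]
    [IsAlgClosure C K]
    (Dσ Dτ : IntermediateField C K)
    [FiniteDimensional C Dσ] [FiniteDimensional C Dτ] :
    (finrank C ↥(Dσ ⊔ Dτ) = Nat.lcm (finrank C Dσ) (finrank C Dτ)) ∧
    (finrank C ↥(Dσ ⊓ Dτ) = Nat.gcd (finrank C Dσ) (finrank C Dτ)) ∧
    (extendScalars (inf_le_left : Dσ ⊓ Dτ ≤ Dσ)).LinearDisjoint
      (extendScalars (inf_le_right : Dσ ⊓ Dτ ≤ Dτ)) ∧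
    Nonempty
      ((↥(extendScalars (inf_le_left : Dσ ⊓ Dτ ≤ Dσ)) ⊗[↥(Dσ ⊓ Dτ)]
          ↥(extendScalars (inf_le_right : Dσ ⊓ Dτ ≤ Dτ))) ≃ₐ[↥(Dσ ⊓ Dτ)]
        ↥(extendScalars (le_trans inf_le_left le_sup_left : Dσ ⊓ Dτ ≤ Dσ ⊔ Dτ))) ∧
    Nonempty
      ((↥Dσ ⊗[C] ↥Dτ) ≃ₐ[C]
        (Fin (finrank C ↥(Dσ ⊓ Dτ)) → ↥(Dσ ⊔ Dτ))) := by
  exact finite_field_compositum_tensor_general C K Dσ Dτ
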